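/- arXiv:2508.00264 — 3 statements merged into one kernel-verified Lean document; each statement's English description precedes it below -/
import Mathlib

section
/- Let K ≥ 1 be a natural number and ℓ : Fin K → ℝ a logit vector. Define the logit-distance vector d : Fin K → ℝ by d_k = (max_j ℓ_j) − ℓ_k, and let u be the uniform distribution u_i = 1/K. Then the mean logit distance is bounded above and below by the KL divergence from u to softmax(ℓ), up to the additive constant log K: KL(u‖softmax(ℓ)) ≤ (1/K)·Σ_{k=1}^{K} d_k ≤ KL(u‖softmax(ℓ)) + log K. -/
open Real Finset

/-- Proposition 3.2: the mean logit distance is bounded above and below by the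
KL divergence from the uniform distribution to `softmax ℓ`, up to `log K`. -/
theorem mean_logit_distance_bounds (K : ℕ) (hK : 1 ≤ K) (ℓ : Fin K → ℝ) :
    (∑ i, (1 / (K : ℝ)) * Real.log ((1 / (K : ℝ)) /
        (Real.exp (ℓ i) / ∑ j, Real.exp (ℓ j)))) ≤
      (1 / (K : ℝ)) * ∑ k,
        ((Finset.univ.sup' (Finset.univ_nonempty_iff.mpr (Fin.pos_iff_nonempty.mp hK)) ℓ) - ℓ k) ∧
    (1 / (K : ℝ)) * ∑ k,
        ((Finset.univ.sup' (Finset.univ_nonempty_iff.mpr (Fin.pos_iff_nonempty.mp hK)) ℓ) - ℓ k) ≤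
      (∑ i, (1 / (K : ℝ)) * Real.log ((1 / (K : ℝ)) /
        (Real.exp (ℓ i) / ∑ j, Real.exp (ℓ j)))) + Real.log K := by
  have hKpos : (0 : ℝ) < K := by exact_mod_cast hK
  have hne : (Finset.univ : Finset (Fin K)).Nonempty :=
    Finset.univ_nonempty_iff.mpr (Fin.pos_iff_nonempty.mp hK)
  have hS : 0 < ∑ j, Real.exp (ℓ j) := Finset.sum_pos (fun j _ => Real.exp_pos _) hne
  have hterm : ∀ i, Real.log ((1 / (K : ℝ)) / (Real.exp (ℓ i) / ∑ j, Real.exp (ℓ j)))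
      = Real.log (∑ j, Real.exp (ℓ j)) - Real.log K - ℓ i := by
    intro i
    rw [Real.log_div (by positivity) (by positivity), Real.log_div (by positivity) hKpos.ne',
      Real.log_div (by positivity) hS.ne', Real.log_exp, Real.log_one]
    ring
  simp only [hterm]
  set M := Finset.univ.sup' (Finset.univ_nonempty_iff.mpr (Fin.pos_iff_nonempty.mp hK)) ℓ with hM
  have hlow : M ≤ Real.log (∑ j, Real.exp (ℓ j)) := by
    refine Finset.sup'_le _ _ fun i _ => ?_
    rw [Real.le_log_iff_exp_le hS]
    exact Finset.single_le_sum (f := fun j => Real.exp (ℓ j))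
      (fun j _ => (Real.exp_pos _).le) (Finset.mem_univ i)
  have hup : Real.log (∑ j, Real.exp (ℓ j)) ≤ Real.log K + M := by
    rw [Real.log_le_iff_le_exp hS, Real.exp_add, Real.exp_log hKpos]
    calc ∑ j, Real.exp (ℓ j) ≤ ∑ _j : Fin K, Real.exp M :=
          Finset.sum_le_sum fun j _ => Real.exp_le_exp.mpr (Finset.le_sup' ℓ (Finset.mem_univ j))
      _ = K * Real.exp M := by simp
  have hsum : ∀ c : ℝ, (1 / (K : ℝ)) * ∑ k, (c - ℓ k) = c - (1 / (K : ℝ)) * ∑ k, ℓ k := by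
    intro c
    rw [Finset.sum_sub_distrib, Finset.sum_const, Finset.card_univ, Fintype.card_fin, nsmul_eq_mul]
    field_simp
  rw [← Finset.mul_sum, hsum, hsum]
  constructor <;> linarith
end

section
/- Let V ≥ 2 and D ≥ 1 be natural numbers and ρ > 0 a real number. Let u : Fin V → ℝ be any vector with Euclidean norm ‖u‖₂ ≤ ρ·√D, and set γ = exp(−ρ·√(D·V/(V−1))). Then the Shannon entropy of the softmax distribution of u satisfies H(softmax(u)) ≥ log(1 + (V−1)·γ) + ρ·γ·√(D·V·(V−1)) / (1 + (V−1)·γ). -/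
open Real Finset

lemma aux_int (s : ℝ) : ∫ x in (0:ℝ)..1, s^2 * ((1 - x) * Real.exp (-(x*s))) = Real.exp (-s) - 1 + s := by
  have h : ∀ x ∈ Set.uIcc (0:ℝ) 1, HasDerivAt (fun x : ℝ => (1 - s * (1 - x)) * Real.exp (-(x*s)))
      (s^2 * ((1 - x) * Real.exp (-(x*s)))) x := by
    intro x _
    have h1 : HasDerivAt (fun x : ℝ => 1 - s * (1 - x)) (s) x := by
      have := (((hasDerivAt_id x).const_sub 1).const_mul s).const_sub 1
      refine HasDerivAt.congr_deriv (this) ?_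
      ring
    have h2 : HasDerivAt (fun x : ℝ => Real.exp (-(x*s))) (Real.exp (-(x*s)) * (-(1*s))) x :=
      (((hasDerivAt_id x).mul_const s).neg).exp
    refine HasDerivAt.congr_deriv (h1.mul h2) ?_
    ring
  rw [intervalIntegral.integral_eq_sub_of_hasDerivAt h]
  · simp; ring
  · apply Continuous.intervalIntegrable
    fun_prop

lemma aux_mono (s y : ℝ) (h : s ≤ y) :
    s^2 * (Real.exp (-y) - 1 + y) ≤ y^2 * (Real.exp (-s) - 1 + s) := by
  rw [← aux_int s, ← aux_int y, intervalIntegral.integral_const_mul,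
    intervalIntegral.integral_const_mul]
  have : ∫ x in (0:ℝ)..1, ((1 - x) * Real.exp (-(x*y))) ≤
      ∫ x in (0:ℝ)..1, ((1 - x) * Real.exp (-(x*s))) := by
    apply intervalIntegral.integral_mono_on (by norm_num)
    · apply Continuous.intervalIntegrable; fun_prop
    · apply Continuous.intervalIntegrable; fun_prop
    · intro x hx
      apply mul_le_mul_of_nonneg_left _ (by linarith [hx.2])
      apply Real.exp_le_exp.2
      nlinarith [hx.1]
  nlinarith [mul_le_mul_of_nonneg_left this (mul_nonneg (sq_nonneg s) (sq_nonneg y))]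

noncomputable def phi (N y : ℝ) : ℝ :=
  Real.log (1 + N * Real.exp (-y)) + N * y * Real.exp (-y) / (1 + N * Real.exp (-y))

noncomputable def pv (N y : ℝ) : ℝ :=
  N * Real.exp (-y) / (1 + N * Real.exp (-y))^2

lemma phi_deriv (N y : ℝ) (hN : 0 < N) : HasDerivAt (phi N) (-(y * pv N y)) y := by
  have hp : 0 < 1 + N * Real.exp (-y) := by positivity
  have he : HasDerivAt (fun y : ℝ => Real.exp (-y)) (Real.exp (-y) * (-1)) y :=
    ((hasDerivAt_id y).neg).exp
  have h1 : HasDerivAt (fun y : ℝ => 1 + N * Real.exp (-y)) (N * (Real.exp (-y) * (-1))) y :=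
    (he.const_mul N).const_add 1
  have h2 : HasDerivAt (fun y : ℝ => N * y * Real.exp (-y))
      (N * 1 * Real.exp (-y) + N * y * (Real.exp (-y) * (-1))) y :=
    ((hasDerivAt_id y).const_mul N).mul he
  have := (h1.log hp.ne').add (h2.div h1 hp.ne')
  unfold phi
  refine HasDerivAt.congr_deriv (this) ?_
  unfold pv
  field_simp
  ring

/-- entropy along a ray -/
noncomputable def ent {V : ℕ} (u : Fin V → ℝ) (t : ℝ) : ℝ :=
  Real.log (∑ i, Real.exp (t * u i)) -
    t * ((∑ i, u i * Real.exp (t * u i)) / ∑ i, Real.exp (t * u i))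

noncomputable def vr {V : ℕ} (u : Fin V → ℝ) (t : ℝ) : ℝ :=
  (∑ i, u i ^ 2 * Real.exp (t * u i)) / (∑ i, Real.exp (t * u i)) -
    ((∑ i, u i * Real.exp (t * u i)) / ∑ i, Real.exp (t * u i)) ^ 2

lemma Zpos {V : ℕ} (hV : 2 ≤ V) (u : Fin V → ℝ) (t : ℝ) : 0 < ∑ i, Real.exp (t * u i) := by
  have : Nonempty (Fin V) := ⟨⟨0, by omega⟩⟩
  exact Finset.sum_pos (fun i _ => Real.exp_pos _) Finset.univ_nonempty

lemma ent_deriv {V : ℕ} (hV : 2 ≤ V) (u : Fin V → ℝ) (t : ℝ) :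
    HasDerivAt (ent u) (-(t * vr u t)) t := by
  have hp := Zpos hV u t
  have he : ∀ i, HasDerivAt (fun t : ℝ => Real.exp (t * u i)) (u i * Real.exp (t * u i)) t := by
    intro i
    have := ((hasDerivAt_id t).mul_const (u i)).exp
    refine HasDerivAt.congr_deriv (this) ?_
    simp only [id]; ring
  have h1 : HasDerivAt (fun t : ℝ => ∑ i, Real.exp (t * u i)) (∑ i, u i * Real.exp (t * u i)) t :=
    HasDerivAt.fun_sum (fun i _ => he i)
  have h2 : HasDerivAt (fun t : ℝ => ∑ i, u i * Real.exp (t * u i))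
      (∑ i, u i ^ 2 * Real.exp (t * u i)) t := by
    apply HasDerivAt.fun_sum
    intro i _
    refine HasDerivAt.congr_deriv ((he i).const_mul (u i)) ?_
    ring
  have := (h1.log hp.ne').sub ((hasDerivAt_id t).mul (h2.div h1 hp.ne'))
  unfold ent
  refine HasDerivAt.congr_deriv (this) ?_
  unfold vr
  simp only [id, Pi.div_apply]
  generalize (∑ i, Real.exp (t * u i)) = Z at hp ⊢
  generalize (∑ i, u i * Real.exp (t * u i)) = A
  generalize (∑ i, u i ^ 2 * Real.exp (t * u i)) = B
  field_simp
  ring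

lemma key {V : ℕ} (hV : 2 ≤ V) (u : Fin V → ℝ) (t y : ℝ) (hy : 0 < y)
    (h : ent u t = phi ((V:ℝ) - 1) y) : t^2 * vr u t ≤ y^2 * pv ((V:ℝ)-1) y := by
  have hp := Zpos hV u t
  set Z := ∑ i, Real.exp (t * u i) with hZ
  have hV' : (2:ℝ) ≤ V := by exact_mod_cast hV
  set N : ℝ := (V:ℝ) - 1 with hN
  have hN1 : 1 ≤ N := by linarith
  have hq : 0 < 1 + N * Real.exp (-y) := by positivity
  set Q := 1 + N * Real.exp (-y) with hQ
  set p : Fin V → ℝ := fun i => Real.exp (t * u i) / Z with hpd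
  have hpp : ∀ i, 0 < p i := fun i => div_pos (Real.exp_pos _) hp
  have hps : ∑ i, p i = 1 := by
    simp only [hpd]; rw [← Finset.sum_div, div_self hp.ne']
  set a := 1 / Q with ha
  set b := Real.exp (-y) / Q with hb
  have hapos : 0 < a := by positivity
  have hbpos : 0 < b := by positivity
  have hab : a + N * b = 1 := by
    rw [ha, hb]; field_simp; rw [hQ]
  -- s i = log (p i / b)
  set s : Fin V → ℝ := fun i => t * u i - Real.log Z + Real.log Q + y with hs
  have hes : ∀ i, p i * Real.exp (-(s i)) = b := by
    intro i
    have : -(s i) = Real.log Z - t * u i - Real.log Q - y := by simp only [hs]; ring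
    rw [this, Real.exp_sub, Real.exp_sub, Real.exp_sub, Real.exp_log hp, Real.exp_log hq]
    simp only [hpd, hb]
    rw [Real.exp_neg]
    field_simp
  have hm1 : ∑ i, p i * u i = (∑ i, u i * Real.exp (t * u i)) / Z := by
    rw [Finset.sum_div]; apply Finset.sum_congr rfl; intro i _; simp only [hpd]; ring
  have hm2 : ∑ i, p i * u i ^ 2 = (∑ i, u i ^ 2 * Real.exp (t * u i)) / Z := by
    rw [Finset.sum_div]; apply Finset.sum_congr rfl; intro i _; simp only [hpd]; ring
  set m1 := ∑ i, p i * u i with hm1d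
  set m2 := ∑ i, p i * u i ^ 2 with hm2d
  have hent : ent u t = Real.log Z - t * m1 := by rw [hm1]; rfl
  have hvr : vr u t = m2 - m1^2 := by rw [hm1, hm2]; rfl
  have hphi : phi N y = Real.log Q + N * b * y := by
    unfold phi; rw [hb]; ring
  have hsum1 : ∑ i, p i * s i = t * m1 - Real.log Z + Real.log Q + y := by
    have : ∀ i, p i * s i = t * (p i * u i) + p i * (- Real.log Z + Real.log Q + y) := by
      intro i; simp only [hs]; ring
    simp_rw [this]
    rw [Finset.sum_add_distrib, ← Finset.mul_sum, ← Finset.sum_mul, hps]; ring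
  have hay : ∑ i, p i * s i = a * y := by
    rw [hsum1]
    have : a = 1 - N * b := by linarith
    rw [this]; linarith
  have hvar : t^2 * vr u t = ∑ i, p i * s i ^ 2 - (∑ i, p i * s i)^2 := by
    rw [hsum1, hvr]
    set k := - Real.log Z + Real.log Q + y with hk
    have : ∀ i, p i * s i ^ 2 = t^2 * (p i * u i ^ 2) + 2 * t * k * (p i * u i) + p i * k^2 := by
      intro i; simp only [hs]; ring
    simp_rw [this]
    rw [Finset.sum_add_distrib, Finset.sum_add_distrib, ← Finset.mul_sum, ← Finset.mul_sum,
      ← Finset.sum_mul, hps]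
    simp only [hk]
    ring
  -- s i ≤ y
  have hsy : ∀ i, s i ≤ y := by
    intro i
    have hgib : ∀ j, p j * ((if j = i then y else 0) - s j) ≤ (if j = i then a else b) - p j := by
      intro j
      have h1 := Real.add_one_le_exp ((if j = i then y else 0) - s j)
      have h2 := mul_le_mul_of_nonneg_left h1 (hpp j).le
      have h3 : p j * Real.exp ((if j = i then y else 0) - s j) = (if j = i then a else b) := by
        rw [sub_eq_add_neg, Real.exp_add, mul_left_comm, hes]
        split_ifs
        · rw [hb, ha, Real.exp_neg]; field_simp
        · simp
      rw [h3] at h2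
      linarith
    have hsumg := Finset.sum_le_sum (fun j (_ : j ∈ Finset.univ) => hgib j)
    have e1 : ∑ j, p j * ((if j = i then y else 0) - s j) = p i * y - a * y := by
      simp_rw [mul_sub]
      rw [Finset.sum_sub_distrib, hay]
      simp
    have e2 : ∑ j, ((if j = i then a else b) - p j) = 0 := by
      rw [Finset.sum_sub_distrib, hps]
      have : ∀ j, (if j = i then a else b) = (if j = i then a - b else 0) + b := by
        intro j; split_ifs <;> ring
      simp_rw [this]
      rw [Finset.sum_add_distrib]
      simp
      have : (V:ℝ) = N + 1 := by rw [hN]; ring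
      rw [this]; linarith
    rw [e1, e2] at hsumg
    have hpa : p i ≤ a := by nlinarith
    have h5 : Real.exp (s i) ≤ Real.exp y := by
      have h6 : p i = b * Real.exp (s i) := by
        rw [← hes i, mul_assoc, ← Real.exp_add]; simp
      have h7 : a = b * Real.exp y := by
        rw [hb, ha, Real.exp_neg]; field_simp
      rw [h6, h7] at hpa
      exact le_of_mul_le_mul_left hpa hbpos
    exact Real.exp_le_exp.1 h5
  have hE : 0 < Real.exp (-y) - 1 + y := by
    have := Real.add_one_lt_exp (x := -y) (by linarith)
    linarith
  have hbd : ∀ i, (p i * s i ^ 2) * (Real.exp (-y) - 1 + y) ≤ y^2 * (b - p i + p i * s i) := by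
    intro i
    have h1 := mul_le_mul_of_nonneg_left (aux_mono (s i) y (hsy i)) (hpp i).le
    have h2 := hes i
    calc _ = p i * (s i ^ 2 * (Real.exp (-y) - 1 + y)) := by ring
      _ ≤ _ := h1
      _ = y^2 * (p i * Real.exp (-(s i)) - p i + p i * s i) := by ring
      _ = _ := by rw [h2]
  have hsb := Finset.sum_le_sum (fun j (_ : j ∈ Finset.univ) => hbd j)
  rw [← Finset.sum_mul, ← Finset.mul_sum, Finset.sum_add_distrib, Finset.sum_sub_distrib, hps, hay] at hsb
  simp only [Finset.sum_const, Finset.card_univ, Fintype.card_fin, nsmul_eq_mul] at hsb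
  have hVN : (V:ℝ) = N + 1 := by rw [hN]; ring
  have hba : b = a * Real.exp (-y) := by rw [hb, ha]; ring
  have hfin : ∑ i, p i * s i ^ 2 ≤ y^2 * a := by
    have : y ^ 2 * (V * b - 1 + a * y) = (y^2 * a) * (Real.exp (-y) - 1 + y) := by
      rw [hVN]
      have : (N+1) * b - 1 = b - a := by linarith
      rw [this, hba]; ring
    rw [this] at hsb
    exact le_of_mul_le_mul_right hsb hE
  have hpv : pv N y = a * (N * b) := by
    unfold pv; rw [ha, hb]; field_simp; rw [hQ]
  rw [hvar, hay, hpv]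
  have : N * b = 1 - a := by linarith
  rw [this]
  nlinarith

lemma pv_pos (N y : ℝ) (hN : 0 < N) : 0 < pv N y := by unfold pv; positivity

lemma start {V : ℕ} (hV : 2 ≤ V) (u : Fin V → ℝ) (c : ℝ)
    (hc : vr u 0 < c^2 * pv ((V:ℝ)-1) 0) :
    ∃ d : ℝ, 0 < d ∧ d < 1 ∧ phi ((V:ℝ)-1) (c * d) ≤ ent u d := by
  have hV' : (2:ℝ) ≤ V := by exact_mod_cast hV
  set N : ℝ := (V:ℝ) - 1 with hN
  have hN1 : 0 < N := by linarith
  have hcv : Continuous (vr u) := by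
    unfold vr
    have : ∀ t, ∑ i, Real.exp (t * u i) ≠ 0 := fun t => (Zpos hV u t).ne'
    fun_prop (disch := assumption)
  have hcp : Continuous (fun t => c^2 * pv N (c * t)) := by
    unfold pv
    have : ∀ t, (1 + N * Real.exp (-(c*t)))^2 ≠ 0 := fun t => by positivity
    fun_prop (disch := assumption)
  have hev : ∀ᶠ t in nhds (0:ℝ), vr u t < c^2 * pv N (c * t) := by
    apply (hcv.tendsto 0).eventually_lt (hcp.tendsto 0)
    simpa using hc
  obtain ⟨e, he, hball⟩ := Metric.eventually_nhds_iff.1 hev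
  refine ⟨min (e/2) (1/2), by positivity, by linarith [min_le_right (e/2) (1/2:ℝ)], ?_⟩
  set d := min (e/2) (1/2:ℝ) with hd
  have hd0 : 0 < d := by positivity
  have hde : d < e := by linarith [min_le_left (e/2) (1/2:ℝ)]
  have hder : ∀ t, HasDerivAt (fun t => ent u t - phi N (c * t))
      (t * (c^2 * pv N (c*t) - vr u t)) t := by
    intro t
    have h1 : HasDerivAt (fun t => phi N (c * t)) (-(c*t * pv N (c*t)) * (c * 1)) t :=
      (phi_deriv N (c*t) hN1).comp t ((hasDerivAt_id t).const_mul c)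
    refine HasDerivAt.congr_deriv ((ent_deriv hV u t).sub h1) ?_
    ring
  have hmono : MonotoneOn (fun t => ent u t - phi N (c * t)) (Set.Icc 0 d) := by
    apply monotoneOn_of_deriv_nonneg (convex_Icc 0 d)
    · exact fun t _ => (hder t).continuousAt.continuousWithinAt
    · exact fun t _ => (hder t).differentiableAt.differentiableWithinAt
    · intro t ht
      rw [interior_Icc] at ht
      rw [(hder t).deriv]
      apply mul_nonneg ht.1.le
      have := @hball t (by rw [Real.dist_eq, sub_zero, abs_of_pos ht.1]; linarith [ht.2])
      linarith
  have := hmono (Set.left_mem_Icc.2 hd0.le) (Set.right_mem_Icc.2 hd0.le) hd0.le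
  have e0 : ent u 0 = Real.log V := by simp [ent]
  have e1 : phi N (c * 0) = Real.log V := by simp [phi, hN]
  simp only [e0, e1] at this
  linarith

lemma barrier {V : ℕ} (hV : 2 ≤ V) (u : Fin V → ℝ) (c : ℝ) (hc0 : 0 < c)
    (hc : vr u 0 < c^2 * pv ((V:ℝ)-1) 0) : phi ((V:ℝ)-1) c ≤ ent u 1 := by
  obtain ⟨d, hd0, hd1, hd⟩ := start hV u c hc
  have hV' : (2:ℝ) ≤ V := by exact_mod_cast hV
  set N : ℝ := (V:ℝ) - 1 with hN
  have hN1 : 0 < N := by linarith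
  set T := Real.log d with hT
  have hT0 : T < 0 := Real.log_neg hd0 hd1
  have hTd : Real.exp T = d := Real.exp_log hd0
  have main : ∀ α : ℝ, 1 < α → phi N (c * d * Real.exp (α * (0 - T))) ≤ ent u 1 := by
    intro α hα
    have hf : ∀ x, HasDerivAt (fun x => phi N (c * d * Real.exp (α * (x - T))))
        (-(α * ((c * d * Real.exp (α * (x - T)))^2 * pv N (c * d * Real.exp (α * (x - T)))))) x := by
      intro x
      have h1 : HasDerivAt (fun x => c * d * Real.exp (α * (x - T)))
          (c * d * (Real.exp (α * (x - T)) * (α * 1))) x :=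
        ((((hasDerivAt_id x).sub_const T).const_mul α).exp).const_mul (c * d)
      refine HasDerivAt.congr_deriv ((phi_deriv N _ hN1).comp x h1) ?_
      ring
    have hB : ∀ x, HasDerivAt (fun x => ent u (Real.exp x))
        (-((Real.exp x)^2 * vr u (Real.exp x))) x := by
      intro x
      refine HasDerivAt.congr_deriv ((ent_deriv hV u (Real.exp x)).comp x (Real.hasDerivAt_exp x)) ?_
      ring
    have := image_le_of_deriv_right_lt_deriv_boundary
      (f := fun x => phi N (c * d * Real.exp (α * (x - T)))) (a := T) (b := 0)
      (fun x _ => (hf x).continuousAt.continuousWithinAt)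
      (fun x _ => (hf x).hasDerivWithinAt)
      (B := fun x => ent u (Real.exp x)) (by simpa [hTd] using hd) hB
      (by
        intro x _ hx
        have hy : 0 < c * d * Real.exp (α * (x - T)) := by positivity
        have h1 := key hV u (Real.exp x) _ hy hx.symm
        have h2 := mul_pos (pow_pos hy 2) (pv_pos N (c * d * Real.exp (α * (x - T))) hN1)
        nlinarith)
      (Set.right_mem_Icc.2 hT0.le)
    simpa using this
  have hcont : Continuous (fun α : ℝ => phi N (c * d * Real.exp (α * (0 - T)))) := by
    have : Continuous (phi N) :=
      continuous_iff_continuousAt.2 (fun y => (phi_deriv N y hN1).continuousAt)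
    fun_prop
  have hlim := (hcont.tendsto 1).mono_left (nhdsWithin_le_nhds (s := Set.Ioi 1))
  have hle := le_of_tendsto hlim (by
    filter_upwards [self_mem_nhdsWithin] with α hα using main α hα)
  have : c * d * Real.exp (1 * (0 - T)) = c := by
    rw [one_mul, zero_sub, Real.exp_neg, hTd]; field_simp
  rwa [this] at hle

lemma final {V : ℕ} (hV : 2 ≤ V) (u : Fin V → ℝ) (L : ℝ) (hL : 0 < L)
    (hu : ∑ i, u i ^ 2 ≤ L^2 * ((V:ℝ)-1) / V) : phi ((V:ℝ)-1) L ≤ ent u 1 := by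
  have hV' : (2:ℝ) ≤ V := by exact_mod_cast hV
  have hN1 : 0 < (V:ℝ) - 1 := by linarith
  have hv : vr u 0 ≤ L^2 * pv ((V:ℝ)-1) 0 := by
    have h1 : vr u 0 ≤ (∑ i, u i ^ 2) / V := by
      simp [vr]; positivity
    have h2 : L^2 * pv ((V:ℝ)-1) 0 = (L^2 * ((V:ℝ)-1) / V) / V := by
      simp [pv]; field_simp
    rw [h2]
    exact h1.trans (div_le_div_of_nonneg_right hu (by linarith))
  have hcont : Continuous (phi ((V:ℝ)-1)) :=
    continuous_iff_continuousAt.2 (fun y => (phi_deriv _ y hN1).continuousAt)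
  have hlim := (hcont.tendsto L).mono_left (nhdsWithin_le_nhds (s := Set.Ioi L))
  apply le_of_tendsto hlim
  filter_upwards [self_mem_nhdsWithin] with c hc
  have hc' : L < c := hc
  apply barrier hV u c (by linarith)
  apply hv.trans_lt
  apply mul_lt_mul_of_pos_right _ (pv_pos _ _ hN1)
  nlinarith

/-- Theorem 4.2 (LM-head entropy lower bound): if `‖u‖₂ ≤ ρ√D`, then the
Shannon entropy of `softmax u` is at least
`log(1 + (V-1)γ) + ργ√(DV(V-1)) / (1 + (V-1)γ)` where
`γ = exp(-ρ√(DV/(V-1)))`. -/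
theorem lm_head_entropy_lower_bound (V D : ℕ) (hV : 2 ≤ V) (hD : 1 ≤ D)
    (ρ : ℝ) (hρ : 0 < ρ) (u : Fin V → ℝ)
    (hu : Real.sqrt (∑ i, u i ^ 2) ≤ ρ * Real.sqrt D) :
    -(∑ i, (Real.exp (u i) / ∑ j, Real.exp (u j)) *
        Real.log (Real.exp (u i) / ∑ j, Real.exp (u j))) ≥
      Real.log (1 + ((V : ℝ) - 1) *
          Real.exp (-ρ * Real.sqrt ((D : ℝ) * V / ((V : ℝ) - 1)))) +
        ρ * Real.exp (-ρ * Real.sqrt ((D : ℝ) * V / ((V : ℝ) - 1))) *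
          Real.sqrt ((D : ℝ) * V * ((V : ℝ) - 1)) /
          (1 + ((V : ℝ) - 1) *
            Real.exp (-ρ * Real.sqrt ((D : ℝ) * V / ((V : ℝ) - 1)))) := by
  have hV' : (2:ℝ) ≤ V := by exact_mod_cast hV
  have hD' : (1:ℝ) ≤ D := by exact_mod_cast hD
  have hN1 : 0 < (V:ℝ) - 1 := by linarith
  set r := Real.sqrt ((D : ℝ) * V / ((V : ℝ) - 1)) with hr
  have hrpos : 0 < r := Real.sqrt_pos.2 (by positivity)
  have hr2 : r^2 = (D : ℝ) * V / ((V : ℝ) - 1) := Real.sq_sqrt (by positivity)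
  have hs : Real.sqrt ((D : ℝ) * V * ((V : ℝ) - 1)) = ((V:ℝ)-1) * r := by
    rw [show (D : ℝ) * V * ((V : ℝ) - 1) = (((V:ℝ)-1) * r)^2 by
      rw [mul_pow, hr2]; field_simp]
    exact Real.sqrt_sq (by positivity)
  have hu2 : ∑ i, u i ^ 2 ≤ (ρ * r)^2 * ((V:ℝ)-1) / V := by
    have h0 : 0 ≤ ∑ i, u i ^ 2 := Finset.sum_nonneg (fun i _ => sq_nonneg _)
    have h1 := pow_le_pow_left₀ (Real.sqrt_nonneg _) hu 2
    rw [Real.sq_sqrt h0, mul_pow, Real.sq_sqrt (by linarith)] at h1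
    rw [mul_pow, hr2]
    refine h1.trans (le_of_eq ?_)
    field_simp
  have hf := final hV u (ρ * r) (by positivity) hu2
  have hp := Zpos hV u 1
  simp only [one_mul] at hp
  have hE : -(∑ i, (Real.exp (u i) / ∑ j, Real.exp (u j)) *
        Real.log (Real.exp (u i) / ∑ j, Real.exp (u j))) = ent u 1 := by
    simp only [ent, one_mul]
    set Z := ∑ j, Real.exp (u j) with hZ
    have : ∀ i, (Real.exp (u i) / Z) * Real.log (Real.exp (u i) / Z)
        = (u i * Real.exp (u i)) / Z - Real.exp (u i) * (Real.log Z / Z) := by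
      intro i
      rw [Real.log_div (Real.exp_pos _).ne' hp.ne', Real.log_exp]; ring
    simp_rw [this]
    rw [Finset.sum_sub_distrib, ← Finset.sum_div, ← Finset.sum_mul, ← hZ]
    field_simp
    ring
  rw [hE, hs]
  refine le_trans (le_of_eq ?_) hf
  unfold phi
  rw [neg_mul]
  ring
end

section
/- Let V ≥ 2 and D ≥ 1 be natural numbers and ρ > 0 a real number, and set γ = exp(−ρ·√(D·V/(V−1))). Then there exists u : Fin V → ℝ with ‖u‖₂ = ρ·√D such that H(softmax(u)) = log(1 + (V−1)·γ) + ρ·γ·√(D·V·(V−1)) / (1 + (V−1)·γ). Consequently the lower bound of the LM-head entropy theorem is attained on the sphere of radius ρ·√D. -/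
open Real Finset

/-- Sharpness of Theorem 4.2: the entropy lower bound is attained by some
logit vector on the sphere of radius `ρ√D`. -/
theorem entropy_lower_bound_attained (V D : ℕ) (hV : 2 ≤ V) (hD : 1 ≤ D)
    (ρ : ℝ) (hρ : 0 < ρ) :
    ∃ u : Fin V → ℝ,
      Real.sqrt (∑ i, u i ^ 2) = ρ * Real.sqrt D ∧
      -(∑ i, (Real.exp (u i) / ∑ j, Real.exp (u j)) *
          Real.log (Real.exp (u i) / ∑ j, Real.exp (u j))) =
        Real.log (1 + ((V : ℝ) - 1) *
            Real.exp (-ρ * Real.sqrt ((D : ℝ) * V / ((V : ℝ) - 1)))) +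
          ρ * Real.exp (-ρ * Real.sqrt ((D : ℝ) * V / ((V : ℝ) - 1))) *
            Real.sqrt ((D : ℝ) * V * ((V : ℝ) - 1)) /
            (1 + ((V : ℝ) - 1) *
              Real.exp (-ρ * Real.sqrt ((D : ℝ) * V / ((V : ℝ) - 1)))) := by
  obtain ⟨n, rfl⟩ : ∃ n, V = n + 1 := ⟨V - 1, by omega⟩
  have hn : (0 : ℝ) < n := by
    have : 0 < n := by omega
    exact_mod_cast this
  have hVn : (((n + 1 : ℕ) : ℝ) - 1) = n := by push_cast; ring
  rw [hVn]
  have hV1 : ((n + 1 : ℕ) : ℝ) = n + 1 := by push_cast; ring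
  rw [hV1]
  have hs2 : Real.sqrt ((D : ℝ) * (n + 1) / n) ^ 2 = (D : ℝ) * (n + 1) / n :=
    Real.sq_sqrt (by positivity)
  have hs3 : Real.sqrt ((D : ℝ) * (n + 1) * n) = n * Real.sqrt ((D : ℝ) * (n + 1) / n) := by
    rw [show (D : ℝ) * (n + 1) * n = n ^ 2 * ((D : ℝ) * (n + 1) / n) by field_simp,
      Real.sqrt_mul (by positivity), Real.sqrt_sq hn.le]
  rw [hs3]
  generalize Real.sqrt ((D : ℝ) * (n + 1) / n) = s at hs2
  obtain ⟨a, ha⟩ : ∃ a, a = ρ * s * n / (n + 1) := ⟨_, rfl⟩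
  have hb : -(ρ * s) / (n + 1) = a + -ρ * s := by rw [ha]; field_simp; ring
  refine ⟨Fin.cons a (fun _ => a + -ρ * s), ?_, ?_⟩
  · have hsum : a ^ 2 + n * (a + -ρ * s) ^ 2 = ρ ^ 2 * D := by
      rw [← hb, ha]
      have : (ρ * s * n / (n + 1)) ^ 2 + n * (-(ρ * s) / (n + 1)) ^ 2
          = ρ ^ 2 * s ^ 2 * n / (n + 1) := by field_simp
      rw [this, hs2]; field_simp
    simp only [Fin.sum_univ_succ, Fin.cons_zero, Fin.cons_succ, Finset.sum_const,
      Finset.card_univ, Fintype.card_fin, nsmul_eq_mul]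
    rw [hsum, Real.sqrt_mul (by positivity), Real.sqrt_sq hρ.le]
  · simp only [Fin.sum_univ_succ, Fin.cons_zero, Fin.cons_succ, Finset.sum_const,
      Finset.card_univ, Fintype.card_fin, nsmul_eq_mul]
    have hZ : Real.exp a + n * Real.exp (a + -ρ * s)
        = Real.exp a * (1 + n * Real.exp (-ρ * s)) := by rw [Real.exp_add]; ring
    have hg := Real.exp_pos (-ρ * s)
    have hea := Real.exp_pos a
    have hW : 0 < 1 + n * Real.exp (-ρ * s) := by positivity
    rw [hZ, Real.log_div (by positivity) (by positivity),
      Real.log_div (by positivity) (by positivity), Real.log_mul hea.ne' hW.ne',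
      Real.log_exp, Real.log_exp, Real.exp_add]
    generalize Real.log (1 + n * Real.exp (-ρ * s)) = L
    generalize Real.exp (-ρ * s) = g at *
    field_simp
    ring
end
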